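/- arXiv:1412.3902 — 2 statements merged into one kernel-verified Lean document; each statement's English description precedes it below -/
import Mathlib

section
/- Let $x > 0$, $t > 0$, and let $a, b$ be real numbers with $0 \le a < b$. For $\omega \in \{-1,1\}^n$ and $0 \le k \le n$ set $S_k(\omega) = x + (\sum_{i=1}^k \omega_i)\sqrt{t}/\sqrt{n}$. Then $\lim_{n\to\infty} \frac{\#\{\omega \in \{-1,1\}^n : S_k(\omega) > 0 \text{ for all } 1 \le k \le n,\ a \le S_n(\omega) \le b\}}{\#\{\omega \in \{-1,1\}^n : S_k(\omega) > 0 \text{ for all } 1 \le k \le n\}} = \frac{\int_a^b \mathcal{H}(t,x,y)\,dy}{\int_0^\infty \mathcal{H}(t,x,y)\,dy}$, where $\mathcal{H}(t,x,y) := \mathcal{G}(t,x,y) - \mathcal{G}(t,x,-y)$. -/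
open MeasureTheory Filter
open scoped Classical

/-- The Gaussian (heat) kernel on the line. -/
noncomputable def G (t x y : ℝ) : ℝ :=
  (1 / Real.sqrt (2 * Real.pi * t)) * Real.exp (-(y - x) ^ 2 / (2 * t))

/-- The heat kernel for the half-line with absorbing boundary at `0`. -/
noncomputable def H (t x y : ℝ) : ℝ := G t x y - G t x (-y)

/-- The partial sum `S_k(ω) = x + (∑_{i=1}^k ω_i) √t / √n` of a walk given by
`ω ∈ {-1,1}^n` (encoded as `Fin n → Bool`, `true` = head = +1, `false` = tail = -1). -/
noncomputable def S (x t : ℝ) (n : ℕ) (ω : Fin n → Bool) (k : ℕ) : ℝ :=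
  x + (∑ i : Fin n, if (i : ℕ) < k then (if ω i then (1 : ℝ) else -1) else 0)
      * Real.sqrt t / Real.sqrt n

/-!
The walk moves on the lattice `x + δℤ` with mesh `δ = √t / √n`, and staying positive means avoiding
its largest nonpositive point `β`. By the reflection principle about `β`, the admissible paths
ending in `I` are counted by the free paths with `S_n ∈ I ∩ (0, ∞)` minus those with
`2β - S_n ∈ I ∩ (0, ∞)`. As `β → 0`, the central limit theorem turns the two counts, divided
by `2 ^ n`, into the masses of `I ∩ (0, ∞)` under Gaussians of variance `t` centred at `x` and `-x`,
whose difference is the integral of `H t x`. The normalisation is the case `I = ℝ`, and its limit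
is positive because `H t x` is.
-/

open ProbabilityTheory Topology

section HalfLineKernel

lemma H_eq_gaussianPDFReal_sub {t : ℝ} (ht : 0 < t) (x y : ℝ) :
    H t x y = gaussianPDFReal x t.toNNReal y - gaussianPDFReal (-x) t.toNNReal y := by
  simp only [H, G, gaussianPDFReal, Real.coe_toNNReal _ ht.le, one_div]
  rw [show (-y - x) ^ 2 = (y - -x) ^ 2 by ring]

lemma integrable_H {t : ℝ} (ht : 0 < t) (x : ℝ) : Integrable (H t x) := by
  rw [funext (H_eq_gaussianPDFReal_sub ht x)]
  exact (integrable_gaussianPDFReal _ _).sub (integrable_gaussianPDFReal _ _)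

lemma H_pos {t x y : ℝ} (ht : 0 < t) (hx : 0 < x) (hy : 0 < y) : 0 < H t x y := by
  have hxy : -(-y - x) ^ 2 < -(y - x) ^ 2 := by nlinarith [mul_pos hx hy]
  unfold H G
  rw [← mul_sub]
  exact mul_pos (by positivity)
    (sub_pos.2 (Real.exp_lt_exp.2 (div_lt_div_of_pos_right hxy (by positivity))))

lemma setIntegral_Ioi_H_pos {t x : ℝ} (ht : 0 < t) (hx : 0 < x) :
    0 < ∫ y in Set.Ioi (0 : ℝ), H t x y := by
  have hpos : ∀ y ∈ Set.Ioi (0 : ℝ), 0 < H t x y := fun y hy ↦ H_pos ht hx hy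
  rw [setIntegral_pos_iff_support_of_nonneg_ae
    (ae_restrict_of_forall_mem measurableSet_Ioi fun y hy ↦ (hpos y hy).le)
    (integrable_H ht x).integrableOn,
    Set.inter_eq_right.2 (show _ ⊆ Function.support (H t x) from fun y hy ↦ (hpos y hy).ne')]
  simp

lemma gaussianReal_real_eq_setIntegral (m : ℝ) {v : NNReal} (hv : v ≠ 0) (s : Set ℝ) :
    (gaussianReal m v).real s = ∫ y in s, gaussianPDFReal m v y := by
  rw [Measure.real, gaussianReal_apply_eq_integral _ hv,
    ENNReal.toReal_ofReal (integral_nonneg fun y ↦ gaussianPDFReal_nonneg _ _ _)]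

lemma setIntegral_H_eq_gaussianReal_sub {t : ℝ} (ht : 0 < t) (x : ℝ) (s : Set ℝ) :
    ∫ y in s, H t x y =
      (gaussianReal x t.toNNReal).real s - (gaussianReal (-x) t.toNNReal).real s := by
  have hv : t.toNNReal ≠ 0 := (Real.toNNReal_pos.2 ht).ne'
  simp only [H_eq_gaussianPDFReal_sub ht, gaussianReal_real_eq_setIntegral _ hv]
  exact integral_sub (integrable_gaussianPDFReal _ _).integrableOn
    (integrable_gaussianPDFReal _ _).integrableOn

end HalfLineKernel

section CoinWalk

/-- The simple random walk on `ℤ` started at `0` with steps `ω`, at time `k`. The indicator of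
`i < k` follows the encoding of `S` and freezes the walk after time `n`. -/
def coinWalk {n : ℕ} (ω : Fin n → Bool) (k : ℕ) : ℤ :=
  ∑ i : Fin n, if (i : ℕ) < k then (if ω i then 1 else -1) else 0

variable {n : ℕ}

@[simp]
lemma coinWalk_zero (ω : Fin n → Bool) : coinWalk ω 0 = 0 := by simp [coinWalk]

lemma coinWalk_cons_succ (b : Bool) (ω : Fin n → Bool) (k : ℕ) :
    coinWalk (Fin.cons b ω : Fin (n + 1) → Bool) (k + 1) =
      (if b then 1 else -1) + coinWalk ω k := by
  simp [coinWalk, Fin.sum_univ_succ]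

lemma coinWalk_self (ω : Fin n → Bool) : coinWalk ω n = ∑ i, if ω i then 1 else -1 := by
  simp [coinWalk]

lemma forall_pos_add_coinWalk_cons_iff {m : ℤ} (hm : 0 < m) (b : Bool) (ω : Fin n → Bool) :
    (∀ k ≤ n + 1, 0 < m + coinWalk (Fin.cons b ω : Fin (n + 1) → Bool) k) ↔
      ∀ k ≤ n, 0 < m + (if b then 1 else -1) + coinWalk ω k := by
  simp only [← Nat.lt_succ_iff, Nat.forall_lt_succ_left, coinWalk_zero, add_zero, hm,
    true_and, coinWalk_cons_succ, add_assoc]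

lemma sum_fin_succ_arrow {α M : Type*} [Fintype α] [AddCommMonoid M]
    (f : (Fin (n + 1) → α) → M) :
    ∑ ω, f ω = ∑ a, ∑ ω : Fin n → α, f (Fin.cons a ω) := by
  rw [← (Fin.consEquiv fun _ ↦ α).sum_comp, Fintype.sum_prod_type]
  rfl

end CoinWalk

section Reflection

variable {M : Type*} [AddCommGroup M]

/-- The sum of `f` over the endpoints of all `n`-step walks on `ℤ` started at `m`. -/
def freeSum (f : ℤ → M) (n : ℕ) (m : ℤ) : M :=
  ∑ ω : Fin n → Bool, f (m + coinWalk ω n)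

/-- The sum of `f` over the endpoints of those `n`-step walks on `ℤ` started at `m` that are
positive at all times, including time `0`. -/
noncomputable def killedSum (f : ℤ → M) (n : ℕ) (m : ℤ) : M :=
  ∑ ω : Fin n → Bool with ∀ k ≤ n, 0 < m + coinWalk ω k, f (m + coinWalk ω n)

lemma freeSum_succ (f : ℤ → M) (n : ℕ) (m : ℤ) :
    freeSum f (n + 1) m = freeSum f n (m + 1) + freeSum f n (m + -1) := by
  simp [freeSum, sum_fin_succ_arrow, coinWalk_cons_succ, add_assoc]

lemma odd_freeSum {f : ℤ → M} (hf : f.Odd) (n : ℕ) : (freeSum f n).Odd := by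
  induction n with
  | zero => simpa [freeSum, Function.Odd] using hf
  | succ n ih =>
    intro m
    rw [freeSum_succ, freeSum_succ, show -m + 1 = -(m + -1) by ring, ih, ← neg_add m 1, ih,
      neg_add_rev]

lemma killedSum_zero_right (f : ℤ → M) (n : ℕ) : killedSum f n 0 = 0 := by
  refine Finset.sum_eq_zero fun ω hω ↦ ?_
  simpa using (Finset.mem_filter.1 hω).2 0 n.zero_le

lemma killedSum_succ (f : ℤ → M) (n : ℕ) {m : ℤ} (hm : 0 < m) :
    killedSum f (n + 1) m = killedSum f n (m + 1) + killedSum f n (m + -1) := by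
  simp [killedSum, Finset.sum_filter, sum_fin_succ_arrow, coinWalk_cons_succ,
    forall_pos_add_coinWalk_cons_iff hm, add_assoc]

-- Both sides solve the same recursion in `n` on the positive integers, and both vanish at `0`:
-- the left because the walk is killed there, the right by oddness.
theorem killedSum_eq_freeSum_of_odd [IsAddTorsionFree M] {f : ℤ → M} (hf : f.Odd) (n : ℕ) {m : ℤ}
    (hm : 0 ≤ m) : killedSum f n m = freeSum f n m := by
  induction n generalizing m with
  | zero =>
    rcases hm.eq_or_lt with rfl | hm
    · simp [killedSum, freeSum, hf.map_zero]
    · simp [killedSum, freeSum, hm]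
  | succ n ih =>
    rcases hm.eq_or_lt with rfl | hm
    · rw [killedSum_zero_right, (odd_freeSum hf _).map_zero]
    · rw [killedSum_succ f n hm, freeSum_succ, ih (by lia), ih (by lia)]

theorem card_forall_pos_mem_eq_sub (n : ℕ) {m : ℤ} (hm : 0 ≤ m) (A : Set ℤ) :
    (Finset.card {ω : Fin n → Bool |
        (∀ k ≤ n, 0 < m + coinWalk ω k) ∧ m + coinWalk ω n ∈ A} : ℤ) =
      Finset.card {ω : Fin n → Bool | m + coinWalk ω n ∈ A ∩ Set.Ioi 0} -
        Finset.card {ω : Fin n → Bool | -(m + coinWalk ω n) ∈ A ∩ Set.Ioi 0} := by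
  let f (z : ℤ) : ℤ := (if z ∈ A ∩ Set.Ioi 0 then 1 else 0) - if -z ∈ A ∩ Set.Ioi 0 then 1 else 0
  have hf : f.Odd := fun z ↦ by simp [f]
  have hf_pos {z : ℤ} (hz : 0 < z) : f z = if z ∈ A then 1 else 0 := by
    simp [f, hz, hz.le]
  have hkilled : killedSum f n m = Finset.card {ω : Fin n → Bool |
      (∀ k ≤ n, 0 < m + coinWalk ω k) ∧ m + coinWalk ω n ∈ A} := by
    have hend : ∀ ω ∈ ({ω | ∀ k ≤ n, 0 < m + coinWalk ω k} : Finset (Fin n → Bool)),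
        f (m + coinWalk ω n) = if m + coinWalk ω n ∈ A then 1 else 0 :=
      fun ω hω ↦ hf_pos ((Finset.mem_filter.1 hω).2 n le_rfl)
    rw [killedSum, Finset.sum_congr rfl hend, Finset.sum_boole, Finset.filter_filter]
  rw [← hkilled, killedSum_eq_freeSum_of_odd hf n hm, freeSum, Finset.sum_sub_distrib,
    Finset.sum_boole, Finset.sum_boole]

end Reflection

section Barrier

/-- The largest point of the lattice `x + δℤ` that is at most `0` (for `0 ≤ x` and `0 < δ`): a walk
on that lattice stays positive as long as it avoids this point. -/
noncomputable def barrier (x δ : ℝ) : ℝ := x - ⌈x / δ⌉₊ * δ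

lemma barrier_nonpos {δ : ℝ} (hδ : 0 < δ) (x : ℝ) : barrier x δ ≤ 0 :=
  sub_nonpos.2 ((div_le_iff₀ hδ).1 (Nat.le_ceil _))

lemma barrier_add_mul_pos_iff {x δ : ℝ} (hx : 0 ≤ x) (hδ : 0 < δ) (z : ℤ) :
    0 < barrier x δ + z * δ ↔ 0 < z := by
  have hlt : 0 < barrier x δ + δ := by
    have := (lt_div_iff₀ hδ).1 (sub_lt_iff_lt_add.2 (Nat.ceil_lt_add_one (div_nonneg hx hδ.le)))
    rw [barrier]
    linarith
  constructor <;> intro hz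
  · by_contra! hz0
    have : (z : ℝ) * δ ≤ 0 := mul_nonpos_of_nonpos_of_nonneg (by exact_mod_cast hz0) hδ.le
    linarith [barrier_nonpos hδ x]
  · have : δ ≤ z * δ := le_mul_of_one_le_left hδ.le (by exact_mod_cast hz)
    linarith

lemma tendsto_barrier {x : ℝ} (hx : 0 ≤ x) : Tendsto (barrier x) (𝓝[>] 0) (𝓝 0) := by
  have h : Tendsto (fun δ : ℝ ↦ ⌈x / δ⌉₊ * δ) (𝓝[>] 0) (𝓝 x) := by
    simpa [Function.comp_def, div_eq_mul_inv] using
      (tendsto_nat_ceil_mul_div_atTop hx).comp (tendsto_inv_nhdsGT_zero (𝕜 := ℝ))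
  simpa [← barrier.eq_1] using h.const_sub x

end Barrier

section ScaledWalk

/-- The mesh `√t / √n` of the lattice on which the scaled walk `S x t n` moves. -/
noncomputable def mesh (t : ℝ) (n : ℕ) : ℝ := Real.sqrt t / Real.sqrt n

lemma mesh_pos {t : ℝ} (ht : 0 < t) {n : ℕ} (hn : 0 < n) : 0 < mesh t n :=
  div_pos (Real.sqrt_pos.2 ht) (Real.sqrt_pos.2 (Nat.cast_pos.2 hn))

lemma tendsto_mesh {t : ℝ} (ht : 0 < t) : Tendsto (mesh t) atTop (𝓝[>] 0) :=
  tendsto_nhdsWithin_iff.2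
    ⟨tendsto_const_nhds.div_atTop (Real.tendsto_sqrt_atTop.comp tendsto_natCast_atTop_atTop),
      (eventually_gt_atTop 0).mono fun _ hn ↦ mesh_pos ht hn⟩

lemma S_eq_add_coinWalk_mul_mesh (x t : ℝ) {n : ℕ} (ω : Fin n → Bool) (k : ℕ) :
    S x t n ω k = x + coinWalk ω k * mesh t n := by
  simp [S, coinWalk, mesh, mul_div_assoc]

lemma S_eq_barrier_add (x t : ℝ) {n : ℕ} (ω : Fin n → Bool) (k : ℕ) :
    S x t n ω k = barrier x (mesh t n) + (⌈x / mesh t n⌉₊ + coinWalk ω k : ℤ) * mesh t n := by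
  rw [S_eq_add_coinWalk_mul_mesh, barrier]
  push_cast
  ring

/-- The event that the scaled walk `S x t n ω` is positive at all times `1, …, n`. -/
def StaysPositive (x t : ℝ) {n : ℕ} (ω : Fin n → Bool) : Prop :=
  ∀ k, 1 ≤ k → k ≤ n → 0 < S x t n ω k

lemma staysPositive_iff_forall_pos_add_coinWalk {x t : ℝ} (hx : 0 < x) (ht : 0 < t) {n : ℕ}
    (hn : 0 < n) (ω : Fin n → Bool) :
    StaysPositive x t ω ↔ ∀ k ≤ n, 0 < (⌈x / mesh t n⌉₊ : ℤ) + coinWalk ω k := by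
  have hδ := mesh_pos ht hn
  simp only [StaysPositive, S_eq_barrier_add, barrier_add_mul_pos_iff hx.le hδ]
  refine ⟨fun h k hk ↦ ?_, fun h k _ hk ↦ h k hk⟩
  rcases k.eq_zero_or_pos with rfl | hk0
  · simpa using div_pos hx hδ
  · exact h k hk0 hk

theorem card_staysPositive_mem_eq_sub {x t : ℝ} (hx : 0 < x) (ht : 0 < t) {n : ℕ} (hn : 0 < n)
    (I : Set ℝ) :
    (Finset.card {ω : Fin n → Bool | StaysPositive x t ω ∧ S x t n ω n ∈ I} : ℤ) =
      Finset.card {ω : Fin n → Bool | S x t n ω n ∈ I ∩ Set.Ioi 0} -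
        Finset.card {ω : Fin n → Bool |
          2 * barrier x (mesh t n) - S x t n ω n ∈ I ∩ Set.Ioi 0} := by
  let A : Set ℤ := {z | barrier x (mesh t n) + z * mesh t n ∈ I}
  have hA (z : ℤ) : z ∈ A ∩ Set.Ioi 0 ↔
      barrier x (mesh t n) + z * mesh t n ∈ I ∩ Set.Ioi 0 :=
    and_congr_right fun _ ↦ (barrier_add_mul_pos_iff hx.le (mesh_pos ht hn) z).symm
  have hend (ω : Fin n → Bool) :
      S x t n ω n ∈ I ↔ (⌈x / mesh t n⌉₊ : ℤ) + coinWalk ω n ∈ A := by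
    rw [S_eq_barrier_add]
    rfl
  have hfree (ω : Fin n → Bool) : S x t n ω n ∈ I ∩ Set.Ioi 0 ↔
      (⌈x / mesh t n⌉₊ : ℤ) + coinWalk ω n ∈ A ∩ Set.Ioi 0 := by
    rw [hA, S_eq_barrier_add]
  have hreflect (ω : Fin n → Bool) :
      2 * barrier x (mesh t n) - S x t n ω n ∈ I ∩ Set.Ioi 0 ↔
        -((⌈x / mesh t n⌉₊ : ℤ) + coinWalk ω n) ∈ A ∩ Set.Ioi 0 := by
    rw [hA, S_eq_barrier_add, Int.cast_neg]
    ring_nf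
  simp only [staysPositive_iff_forall_pos_add_coinWalk hx ht hn, hend, hfree, hreflect]
  exact card_forall_pos_mem_eq_sub n (Int.natCast_nonneg _) A

end ScaledWalk

section CentralLimit

lemma map_comp_infinitePi_eq_pi {ι κ : Type*} [Fintype κ] {X : ι → Type*}
    [∀ i, MeasurableSpace (X i)] (μ : ∀ i, Measure (X i)) [∀ i, IsProbabilityMeasure (μ i)]
    {e : κ → ι} (he : e.Injective) :
    (Measure.infinitePi μ).map (fun ω k ↦ ω (e k)) = Measure.pi fun k ↦ μ (e k) := by
  have hindep : iIndepFun (fun k (ω : ∀ i, X i) ↦ ω (e k)) (Measure.infinitePi μ) :=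
    (iIndepFun_infinitePi (X := fun _ ↦ id) fun _ ↦ measurable_id).precomp he
  rw [hindep.map_fun_eq_pi_map fun k ↦ (measurable_pi_apply (e k)).aemeasurable]
  simp only [Measure.infinitePi_map_eval]

/-- The law of an infinite sequence of independent fair coin tosses. -/
noncomputable def fairCoins : Measure (ℕ → Bool) :=
  Measure.infinitePi fun _ ↦ uniformOn Set.univ

instance : IsProbabilityMeasure fairCoins := by
  unfold fairCoins
  infer_instance

lemma map_prefix_fairCoins (n : ℕ) :
    fairCoins.map (fun ω (i : Fin n) ↦ ω i) = uniformOn Set.univ := by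
  rw [fairCoins, map_comp_infinitePi_eq_pi _ Fin.val_injective, ← uniformOn_pi, Set.pi_univ]

lemma fairCoins_real_prefix {n : ℕ} (p : (Fin n → Bool) → Prop) :
    fairCoins.real {ω | p fun i ↦ ω i} = (Finset.card {ω | p ω} : ℝ) / 2 ^ n := by
  have hmeas : Measurable fun (ω : ℕ → Bool) (i : Fin n) ↦ ω i := by fun_prop
  have hmap := map_measureReal_apply (μ := fairCoins) hmeas (Set.toFinite {ω | p ω}).measurableSet
  rw [map_prefix_fairCoins] at hmap
  rw [← Set.preimage_ofPred_eq, ← hmap, Measure.real, uniformOn_univ, ← Finset.coe_filter_univ,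
    Measure.count_apply_finset]
  simp

/-- The `±1`-valued outcome of the toss `b`. -/
def coinSign (b : Bool) : ℝ := if b then 1 else -1

lemma integral_coinSign_fairCoins (k : ℕ) : ∫ ω, coinSign (ω k) ∂fairCoins = 0 := by
  rw [← integral_map (φ := fun ω : ℕ → Bool ↦ ω k) (f := coinSign)
    (measurable_pi_apply k).aemeasurable (measurable_of_finite _).aestronglyMeasurable,
    fairCoins, Measure.infinitePi_map_eval, integral_fintype .of_finite]
  rw [Fintype.sum_bool]
  simp only [measureReal_def, uniformOn_univ, Measure.count_singleton, coinSign]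
  simp

lemma cast_coinWalk_prefix (ω : ℕ → Bool) (n : ℕ) :
    (coinWalk (fun i : Fin n ↦ ω i) n : ℝ) = ∑ k ∈ Finset.range n, coinSign (ω k) := by
  rw [coinWalk_self, Finset.sum_range]
  simp [coinSign]

theorem tendstoInDistribution_coinWalk :
    TendstoInDistribution
      (fun (n : ℕ) (ω : ℕ → Bool) ↦ (Real.sqrt n)⁻¹ * coinWalk (fun i : Fin n ↦ ω i) n)
      atTop id (fun _ ↦ fairCoins) (gaussianReal 0 1) := by
  simp only [cast_coinWalk_prefix]
  refine tendstoInDistribution_inv_sqrt_mul_sum (X := fun k (ω : ℕ → Bool) ↦ coinSign (ω k)) .id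
    (integral_coinSign_fairCoins 0) ?_ ?_ ?_
  · have hsq (ω : ℕ → Bool) : coinSign (ω 0) ^ 2 = 1 := by unfold coinSign; split_ifs <;> norm_num
    simp [hsq]
  · exact iIndepFun_infinitePi (X := fun _ ↦ coinSign) fun _ ↦ measurable_of_finite _
  · intro k
    refine IdentDistrib.comp (u := coinSign) (f := fun ω : ℕ → Bool ↦ ω k)
      (g := fun ω : ℕ → Bool ↦ ω 0) ⟨(measurable_pi_apply k).aemeasurable,
        (measurable_pi_apply 0).aemeasurable, ?_⟩ (measurable_of_finite _)
    simp only [fairCoins, Measure.infinitePi_map_eval]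

lemma tendsto_card_coinWalk_mem_div {c : ℕ → ℝ} {c₀ s : ℝ} (hs : s ≠ 0)
    (hc : Tendsto c atTop (𝓝 c₀)) {I : Set ℝ} (hIm : MeasurableSet I)
    (hI : volume (frontier I) = 0) :
    Tendsto
      (fun n : ℕ ↦ (Finset.card {ω : Fin n → Bool |
        s * ((Real.sqrt n)⁻¹ * coinWalk ω n) + c n ∈ I} : ℝ) / 2 ^ n)
      atTop (𝓝 ((gaussianReal c₀ (s ^ 2).toNNReal).real I)) := by
  have hconst : TendstoInMeasure fairCoins (fun n _ ↦ c n) atTop fun _ ↦ c₀ :=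
    tendstoInMeasure_of_tendsto_ae (fun _ ↦ aestronglyMeasurable_const) (ae_of_all _ fun _ ↦ hc)
  have hlim := (tendstoInDistribution_coinWalk.continuous_comp (g := (s * ·))
    (by fun_prop)).add_of_tendstoInMeasure_const hconst fun _ ↦ aemeasurable_const
  have hlaw : (gaussianReal 0 1).map (fun y ↦ s * y + c₀) = gaussianReal c₀ (s ^ 2).toNNReal := by
    have h := (gaussianReal_add_const (gaussianReal_const_mul (HasLaw.id (μ := gaussianReal 0 1)) s)
      c₀).map_eq
    simpa [Real.toNNReal_of_nonneg (sq_nonneg s)] using h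
  have hnull : gaussianReal c₀ (s ^ 2).toNNReal (frontier I) = 0 :=
    gaussianReal_absolutelyContinuous c₀ (Real.toNNReal_pos.2 (by positivity)).ne' hI
  have hmeasure := ProbabilityMeasure.tendsto_measure_of_null_frontier_of_tendsto' hlim.tendsto
    (E := I) (by simpa [hlaw] using hnull)
  simp only [ProbabilityMeasure.coe_mk, Function.comp_apply, id, hlaw] at hmeasure
  refine ((ENNReal.tendsto_toReal (measure_ne_top _ I)).comp hmeasure).congr fun n ↦ ?_
  rw [Function.comp_apply, Measure.map_apply_of_aemeasurable (hlim.forall_aemeasurable n) hIm]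
  exact fairCoins_real_prefix fun ω ↦ s * ((Real.sqrt n)⁻¹ * coinWalk ω n) + c n ∈ I

end CentralLimit

theorem tendsto_card_staysPositive_mem_div {x t : ℝ} (hx : 0 < x) (ht : 0 < t) {I : Set ℝ}
    (hIm : MeasurableSet I) (hI : volume (frontier I) = 0) :
    Tendsto
      (fun n : ℕ ↦ (Finset.card {ω : Fin n → Bool | StaysPositive x t ω ∧ S x t n ω n ∈ I} : ℝ) /
        2 ^ n)
      atTop (𝓝 (∫ y in I ∩ Set.Ioi 0, H t x y)) := by
  have hJm : MeasurableSet (I ∩ Set.Ioi 0) := hIm.inter measurableSet_Ioi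
  have hJ : volume (frontier (I ∩ Set.Ioi 0)) = 0 :=
    null_frontier_inter hI (by simp)
  have hfree := tendsto_card_coinWalk_mem_div (Real.sqrt_pos.2 ht).ne'
    (tendsto_const_nhds (x := x)) hJm hJ
  have hcenter : Tendsto (fun n ↦ 2 * barrier x (mesh t n) - x) atTop (𝓝 (-x)) := by
    simpa using (((tendsto_barrier hx.le).comp (tendsto_mesh ht)).const_mul 2).sub_const x
  have hreflected := tendsto_card_coinWalk_mem_div (neg_ne_zero.2 (Real.sqrt_pos.2 ht).ne')
    hcenter hJm hJ
  rw [neg_sq, Real.sq_sqrt ht.le] at hreflected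
  rw [Real.sq_sqrt ht.le] at hfree
  rw [setIntegral_H_eq_gaussianReal_sub ht]
  refine (hfree.sub hreflected).congr' ?_
  filter_upwards [eventually_gt_atTop 0] with n hn
  have hS (ω : Fin n → Bool) :
      S x t n ω n = Real.sqrt t * ((Real.sqrt n)⁻¹ * coinWalk ω n) + x := by
    rw [S_eq_add_coinWalk_mul_mesh, mesh]
    ring
  have hS' (ω : Fin n → Bool) : 2 * barrier x (mesh t n) - S x t n ω n =
      -Real.sqrt t * ((Real.sqrt n)⁻¹ * coinWalk ω n) + (2 * barrier x (mesh t n) - x) := by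
    rw [hS]
    ring
  have hcard := congrArg (Int.cast : ℤ → ℝ) (card_staysPositive_mem_eq_sub hx ht hn I)
  push_cast at hcard
  simp only [← hS', ← hS]
  rw [← sub_div, ← hcard]

lemma setIntegral_Icc_inter_Ioi_eq_intervalIntegral {a b c : ℝ} (hc : c ≤ a) (hab : a ≤ b)
    (f : ℝ → ℝ) : ∫ y in Set.Icc a b ∩ Set.Ioi c, f y = ∫ y in a..b, f y := by
  have hIoc : Set.Ioc a b ∩ Set.Ioi c = Set.Ioc a b :=
    Set.inter_eq_left.2 fun y hy ↦ hc.trans_lt hy.1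
  rw [intervalIntegral.integral_of_le hab, ← hIoc]
  exact setIntegral_congr_set (Ioc_ae_eq_Icc.symm.inter (ae_eq_refl _))

theorem stmt1_general {x t : ℝ} (hx : 0 < x) (ht : 0 < t) {I : Set ℝ}
    (hIm : MeasurableSet I) (hI : volume (frontier I) = 0) :
    Tendsto
      (fun n : ℕ ↦
        (Finset.card {ω : Fin n → Bool | StaysPositive x t ω ∧ S x t n ω n ∈ I} : ℝ) /
          (Finset.card {ω : Fin n → Bool | StaysPositive x t ω} : ℝ))
      atTop (𝓝 ((∫ y in I ∩ Set.Ioi 0, H t x y) / ∫ y in Set.Ioi 0, H t x y)) := by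
  have hden : Tendsto
      (fun n : ℕ ↦ (Finset.card {ω : Fin n → Bool | StaysPositive x t ω} : ℝ) / 2 ^ n)
      atTop (𝓝 (∫ y in Set.Ioi 0, H t x y)) := by
    simpa using tendsto_card_staysPositive_mem_div hx ht MeasurableSet.univ (by simp)
  refine ((tendsto_card_staysPositive_mem_div hx ht hIm hI).div hden
    (setIntegral_Ioi_H_pos ht hx).ne').congr fun n ↦ ?_
  exact div_div_div_cancel_right₀ (by positivity) _ _

theorem stmt1 (x t : ℝ) (hx : 0 < x) (ht : 0 < t) (a b : ℝ) (ha : 0 ≤ a) (hab : a < b) :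
    Tendsto
      (fun n : ℕ =>
        ((Finset.univ.filter (fun ω : Fin n → Bool =>
            (∀ k, 1 ≤ k → k ≤ n → 0 < S x t n ω k) ∧
              a ≤ S x t n ω n ∧ S x t n ω n ≤ b)).card : ℝ)
        /
        ((Finset.univ.filter (fun ω : Fin n → Bool =>
            ∀ k, 1 ≤ k → k ≤ n → 0 < S x t n ω k)).card : ℝ))
      atTop
      (nhds ((∫ y in a..b, H t x y) / (∫ y in Set.Ioi (0 : ℝ), H t x y))) := by
  have hI : volume (frontier (Set.Icc a b)) = 0 := (convex_Icc a b).addHaar_frontier volume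
  rw [← setIntegral_Icc_inter_Ioi_eq_intervalIntegral ha hab.le]
  exact (stmt1_general hx ht measurableSet_Icc hI).congr fun n ↦ by congr!
end

section
/- Let $L > 0$, $x \in (0,L)$, $t > 0$, and let $a, b$ be real numbers with $0 \le a < b \le L$. For $m \in \mathbb{Z}$ and $n \in \mathbb{N}$ define $\alpha_{m,n} := 2^{-n} |\mathcal{P}_n((2mL+a, 2mL+b))|$ and $\beta_{m,n} := 2^{-n} |\mathcal{P}_n((2mL-b, 2mL-a))|$. Then $\lim_{n\to\infty} \sum_{m=-\infty}^{\infty} (\alpha_{m,n} - \beta_{m,n}) = \sum_{m=-\infty}^{\infty} \lim_{n\to\infty} (\alpha_{m,n} - \beta_{m,n}) = \sum_{m=-\infty}^{\infty} \left( \int_{2mL+a}^{2mL+b} \mathcal{G}(t,x,y)\,dy - \int_{2mL-b}^{2mL-a} \mathcal{G}(t,x,y)\,dy \right)$; in particular, all limits and sums appearing here exist, and the interchange of the limit $n \to \infty$ with the summation over $m$ is valid. -/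
open MeasureTheory Filter
open scoped Classical

/-- `𝒫ₙ(U)`: the set of `n`-step walks whose endpoint `Sₙ(ω)` lies in `U`. -/
noncomputable def P (x t : ℝ) (n : ℕ) (U : Set ℝ) : Finset (Fin n → Bool) :=
  Finset.univ.filter (fun ω => S x t n ω n ∈ U)

/-- `α_{m,n} := 2^{-n} |𝒫ₙ((2mL+a, 2mL+b))|`. -/
noncomputable def alpha (L x t a b : ℝ) (m : ℤ) (n : ℕ) : ℝ :=
  ((P x t n (Set.Ioo (2 * m * L + a) (2 * m * L + b))).card : ℝ) / 2 ^ n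

/-- `β_{m,n} := 2^{-n} |𝒫ₙ((2mL-b, 2mL-a))|`. -/
noncomputable def beta (L x t a b : ℝ) (m : ℤ) (n : ℕ) : ℝ :=
  ((P x t n (Set.Ioo (2 * m * L - b) (2 * m * L - a))).card : ℝ) / 2 ^ n

/-!
Under the uniform measure on `{-1,1}ⁿ`, the number `2⁻ⁿ |𝒫ₙ(U)|` is the probability that the
endpoint `Sₙ` lies in `U`, and the central limit theorem says that the law of the endpoint converges
weakly to the Gaussian law with mean `x` and variance `t`. The intervals `(2mL + a, 2mL + b)` are
pairwise disjoint, so summing over `m` amounts to evaluating these laws on the union of the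
intervals. Since the intervals are also locally finite, the boundary of the union is contained in
the countable set of their endpoints and is Gaussian-null. Hence the portmanteau theorem applies to
the union just as it does to each interval, and exchanging the limit with the sum requires no
uniform tail estimate. The same argument applies to `β`, which is `α` for the interval `(-b, -a)`.
-/

open ProbabilityTheory hiding beta
open scoped Function Topology

section WeakConvergence

theorem frontier_iUnion_subset_of_locallyFinite {X ι : Type*} [TopologicalSpace X]
    {U : ι → Set X} (hU : LocallyFinite U) : frontier (⋃ i, U i) ⊆ ⋃ i, frontier (U i) := by
  rintro y ⟨hy_closure, hy_interior⟩
  rw [hU.closure_iUnion] at hy_closure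
  obtain ⟨i, hi⟩ := Set.mem_iUnion.1 hy_closure
  exact Set.mem_iUnion.2
    ⟨i, hi, fun h ↦ hy_interior (interior_mono (Set.subset_iUnion U i) h)⟩

theorem hasSum_measureReal_iUnion {Ω ι : Type*} [MeasurableSpace Ω] [Countable ι]
    (μ : Measure Ω) [IsFiniteMeasure μ] {U : ι → Set Ω} (hd : Pairwise (Disjoint on U))
    (hm : ∀ i, MeasurableSet (U i)) : HasSum (fun i ↦ μ.real (U i)) (μ.real (⋃ i, U i)) := by
  have h_union : μ (⋃ i, U i) = ∑' i, μ (U i) := measure_iUnion hd hm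
  have h_ne_top : ∑' i, μ (U i) ≠ ⊤ := h_union ▸ measure_ne_top μ _
  simp only [Measure.real, h_union, ENNReal.tsum_toReal_eq fun i ↦ measure_ne_top μ (U i)]
  exact (ENNReal.summable_toReal h_ne_top).hasSum

variable {Ω ι κ : Type*} [TopologicalSpace Ω] [HasOuterApproxClosed Ω] [MeasurableSpace Ω]
  [OpensMeasurableSpace Ω] {l : Filter κ} {ν : κ → ProbabilityMeasure Ω} {μ : ProbabilityMeasure Ω}

theorem tendsto_measureReal_of_null_frontier (hν : Tendsto ν l (𝓝 μ)) {U : Set Ω}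
    (hU : (μ : Measure Ω) (frontier U) = 0) :
    Tendsto (fun k ↦ (ν k : Measure Ω).real U) l (𝓝 ((μ : Measure Ω).real U)) :=
  (ENNReal.tendsto_toReal (measure_ne_top _ _)).comp
    (ProbabilityMeasure.tendsto_measure_of_null_frontier_of_tendsto' hν hU)

theorem tendsto_tsum_measureReal_of_null_frontier [Countable ι] (hν : Tendsto ν l (𝓝 μ))
    {U : ι → Set Ω} (hd : Pairwise (Disjoint on U)) (hm : ∀ i, MeasurableSet (U i))
    (hfin : LocallyFinite U) (hU : ∀ i, (μ : Measure Ω) (frontier (U i)) = 0) :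
    Tendsto (fun k ↦ ∑' i, (ν k : Measure Ω).real (U i)) l
      (𝓝 (∑' i, (μ : Measure Ω).real (U i))) := by
  simp only [fun ρ : ProbabilityMeasure Ω ↦
    (hasSum_measureReal_iUnion (ρ : Measure Ω) hd hm).tsum_eq]
  exact tendsto_measureReal_of_null_frontier hν <|
    measure_mono_null (frontier_iUnion_subset_of_locallyFinite hfin) (measure_iUnion_null hU)

end WeakConvergence

section UniformOn

variable {Ω : Type*} [Fintype Ω] [MeasurableSpace Ω] [MeasurableSingletonClass Ω]

theorem uniformOn_univ_real_coe_finset (F : Finset Ω) :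
    (uniformOn (Set.univ : Set Ω)).real F = F.card / Fintype.card Ω := by
  simp [Measure.real, uniformOn_univ]

theorem integral_uniformOn_univ (f : Ω → ℝ) :
    ∫ ω, f ω ∂uniformOn (Set.univ : Set Ω) = (∑ ω, f ω) / Fintype.card Ω := by
  have hsingleton (ω : Ω) : (uniformOn (Set.univ : Set Ω)).real {ω} = (Fintype.card Ω : ℝ)⁻¹ := by
    simpa using uniformOn_univ_real_coe_finset {ω}
  simp only [integral_fintype .of_finite, hsingleton, smul_eq_mul, inv_mul_eq_div,
    Finset.sum_div]

end UniformOn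

section CentralLimit

theorem tendstoInDistribution_inv_sqrt_mul_sum_pi {E : Type*} [MeasurableSpace E]
    (μ : Measure E) [IsProbabilityMeasure μ] {f : E → ℝ} (hf : Measurable f)
    (hmean : ∫ e, f e ∂μ = 0) (hvar : ∫ e, f e ^ 2 ∂μ = 1) :
    TendstoInDistribution (fun (n : ℕ) (ω : Fin n → E) ↦ (√n)⁻¹ * ∑ i, f (ω i)) atTop id
      (fun n ↦ Measure.pi fun _ : Fin n ↦ μ) (gaussianReal 0 1) := by
  obtain ⟨Ω, _, Q, X, hX, hlaw, hindep, _⟩ := exists_iid ℕ μ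
  have hclt : TendstoInDistribution
      (fun (n : ℕ) ω ↦ (√n)⁻¹ * ∑ k ∈ Finset.range n, f (X k ω)) atTop id
      (fun _ ↦ Q) (gaussianReal 0 1) := by
    refine tendstoInDistribution_inv_sqrt_mul_sum (X := fun k ↦ f ∘ X k) .id ?_ ?_
      (hindep.comp (fun _ ↦ f) fun _ ↦ hf) fun k ↦ ?_
    · rw [← hmean]
      exact (hlaw 0).integral_comp hf.aestronglyMeasurable
    · rw [← hvar]
      exact (hlaw 0).integral_comp (hf.pow_const 2).aestronglyMeasurable
    · exact ((hlaw k).identDistrib (hlaw 0)).comp hf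
  have hpi (n : ℕ) : Q.map (fun ω (i : Fin n) ↦ X i ω) = Measure.pi fun _ ↦ μ := by
    rw [(iIndepFun_iff_map_fun_eq_pi_map fun i : Fin n ↦ (hX i).aemeasurable).1
      (hindep.precomp Fin.val_injective)]
    simp only [(hlaw _).map_eq]
  have hlaw_sum (n : ℕ) :
      Q.map (fun ω ↦ (√n)⁻¹ * ∑ k ∈ Finset.range n, f (X k ω)) =
        (Measure.pi fun _ : Fin n ↦ μ).map fun ω ↦ (√n)⁻¹ * ∑ i, f (ω i) := by
    rw [← hpi, Measure.map_map (by fun_prop) (by fun_prop)]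
    simp only [Function.comp_def, Finset.sum_range]
  refine ⟨fun n ↦ Measurable.aemeasurable (by fun_prop), aemeasurable_id, ?_⟩
  simpa only [hlaw_sum] using hclt.tendsto

end CentralLimit

section Endpoint

theorem S_self_eq (x t : ℝ) (n : ℕ) (ω : Fin n → Bool) :
    S x t n ω n = x + √t * ((√n)⁻¹ * ∑ i, if ω i then (1 : ℝ) else -1) := by
  simp only [S, Fin.is_lt, if_true]
  ring

/-- The law of the endpoint `Sₙ(ω)` of the rescaled walk, for `ω` uniformly distributed on
`{-1,1}ⁿ`. -/
noncomputable def endpointLaw (x t : ℝ) (n : ℕ) : ProbabilityMeasure ℝ :=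
  ⟨(uniformOn Set.univ).map fun ω : Fin n → Bool ↦ S x t n ω n,
    Measure.isProbabilityMeasure_map Measurable.of_discrete.aemeasurable⟩

theorem map_const_add_sqrt_mul_gaussianReal (x : ℝ) {t : ℝ} (ht : 0 ≤ t) :
    (gaussianReal 0 1).map (fun w ↦ x + √t * w) = gaussianReal x t.toNNReal := by
  have h := (gaussianReal_const_add
    (gaussianReal_const_mul (HasLaw.id (μ := gaussianReal 0 1)) √t) x).map_eq
  have hvar : NNReal.mk (√t ^ 2) (sq_nonneg _) * 1 = t.toNNReal := by
    ext
    simp [ht]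
  rwa [hvar, mul_zero, zero_add] at h

/-- The Gaussian law with mean `x` and variance `t`, as a point of the space of probability
measures with its weak topology. -/
noncomputable def gaussianLaw (x t : ℝ) : ProbabilityMeasure ℝ :=
  ⟨gaussianReal x t.toNNReal, inferInstance⟩

theorem tendsto_endpointLaw (x : ℝ) {t : ℝ} (ht : 0 ≤ t) :
    Tendsto (endpointLaw x t) atTop (𝓝 (gaussianLaw x t)) := by
  let sign (c : Bool) : ℝ := if c then 1 else -1
  have hmean : ∫ c, sign c ∂uniformOn Set.univ = 0 := by
    rw [integral_uniformOn_univ]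
    simp [sign]
  have hvar : ∫ c, sign c ^ 2 ∂uniformOn Set.univ = 1 := by
    rw [integral_uniformOn_univ]
    norm_num [sign]
  have hclt := (tendstoInDistribution_inv_sqrt_mul_sum_pi (uniformOn (Set.univ : Set Bool))
    (f := sign) .of_discrete hmean hvar).continuous_comp (g := fun w ↦ x + √t * w) (by fun_prop)
  have hlaw (n : ℕ) : (uniformOn Set.univ).map (fun ω : Fin n → Bool ↦ S x t n ω n) =
      (Measure.pi fun _ : Fin n ↦ uniformOn (Set.univ : Set Bool)).map
        ((fun w ↦ x + √t * w) ∘ fun ω ↦ (√n)⁻¹ * ∑ i, sign (ω i)) := by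
    rw [← uniformOn_pi, Set.pi_univ]
    simp only [S_self_eq, Function.comp_def, sign]
  unfold endpointLaw gaussianLaw
  simp only [hlaw, ← map_const_add_sqrt_mul_gaussianReal x ht]
  exact hclt.tendsto

theorem endpointLaw_real_eq_card_div (x t : ℝ) (n : ℕ) {U : Set ℝ} (hU : MeasurableSet U) :
    (endpointLaw x t n : Measure ℝ).real U = ((P x t n U).card : ℝ) / 2 ^ n := by
  have hpre : (fun ω : Fin n → Bool ↦ S x t n ω n) ⁻¹' U = (P x t n U : Set (Fin n → Bool)) := by
    ext ω
    simp [P]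
  change ((uniformOn Set.univ).map fun ω : Fin n → Bool ↦ S x t n ω n).real U = _
  rw [map_measureReal_apply .of_discrete hU, hpre, uniformOn_univ_real_coe_finset]
  simp

theorem gaussianLaw_real_Ioo (x : ℝ) {t : ℝ} (ht : 0 < t) {c d : ℝ} (hcd : c ≤ d) :
    (gaussianLaw x t : Measure ℝ).real (Set.Ioo c d) = ∫ y in c..d, G t x y := by
  change (gaussianReal x t.toNNReal).real (Set.Ioo c d) = _
  have hpdf : G t x = gaussianPDFReal x t.toNNReal := by
    ext y
    simp [G, gaussianPDFReal, ht.le]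
  rw [Measure.real, gaussianReal_apply_eq_integral x (by simpa using ht), ENNReal.toReal_ofReal
    (integral_nonneg fun _ ↦ gaussianPDFReal_nonneg _ _ _),
    intervalIntegral.integral_of_le hcd, integral_Ioc_eq_integral_Ioo, hpdf]

theorem gaussianLaw_frontier_Ioo (x : ℝ) {t : ℝ} (ht : 0 < t) (c d : ℝ) :
    (gaussianLaw x t : Measure ℝ) (frontier (Set.Ioo c d)) = 0 :=
  gaussianReal_absolutelyContinuous x (by simpa using ht)
    ((convex_Ioo c d).addHaar_frontier volume)

end Endpoint

section Translates

/-- The translate of `(c, d)` by `2mL`; for `(c, d) = (a, b)` and `(c, d) = (-b, -a)` these are the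
images of `(a, b)` under the group generated by the reflections in `0` and `L`. -/
def translateIoo (L c d : ℝ) (m : ℤ) : Set ℝ :=
  Set.Ioo (2 * m * L + c) (2 * m * L + d)

variable {L c d : ℝ}

theorem pairwise_disjoint_translateIoo (hwidth : d - c ≤ 2 * L) :
    Pairwise (Disjoint on translateIoo L c d) := by
  refine (Set.pairwise_disjoint_Ioo_add_zsmul c (2 * L)).mono fun m k h ↦ h.mono ?_ ?_ <;>
  · refine Set.Ioo_subset_Ioo ?_ ?_ <;> simp only [zsmul_eq_mul] <;> push_cast <;> linarith

theorem locallyFinite_translateIoo (hL : 0 < L) (c d : ℝ) :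
    LocallyFinite (translateIoo L c d) := by
  have hcast (m : ℤ) : 2 * (m : ℝ) * L = m * (2 * L) := by ring
  have hpos : 0 < 2 * L := by positivity
  refine locallyFinite_Ioo_of_tendsto (tendsto_atTop_add_const_right _ c ?_)
    (tendsto_atBot_add_const_right _ d ?_)
  · simpa only [hcast] using tendsto_intCast_atTop_atTop.atTop_mul_const hpos
  · simpa only [hcast, id] using (tendsto_intCast_atBot_iff.2 tendsto_id).atBot_mul_const hpos

end Translates

section Alpha

variable {L x t a b : ℝ}

theorem alpha_eq_endpointLaw (L x t a b : ℝ) (m : ℤ) (n : ℕ) :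
    alpha L x t a b m n = (endpointLaw x t n : Measure ℝ).real (translateIoo L a b m) :=
  (endpointLaw_real_eq_card_div x t n measurableSet_Ioo).symm

theorem beta_eq_alpha_neg (L x t a b : ℝ) : beta L x t a b = alpha L x t (-b) (-a) := by
  ext m n
  simp only [alpha, beta, sub_eq_add_neg]

theorem integral_G_eq_gaussianLaw (ht : 0 < t) (hab : a ≤ b) (m : ℤ) :
    ∫ y in (2 * m * L + a)..(2 * m * L + b), G t x y =
      (gaussianLaw x t : Measure ℝ).real (translateIoo L a b m) :=
  (gaussianLaw_real_Ioo x ht (by gcongr)).symm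

theorem tendsto_alpha (ht : 0 < t) (hab : a ≤ b) (m : ℤ) :
    Tendsto (alpha L x t a b m) atTop
      (𝓝 (∫ y in (2 * m * L + a)..(2 * m * L + b), G t x y)) := by
  rw [integral_G_eq_gaussianLaw ht hab, funext (alpha_eq_endpointLaw L x t a b m)]
  exact tendsto_measureReal_of_null_frontier (tendsto_endpointLaw x ht.le)
    (gaussianLaw_frontier_Ioo x ht _ _)

theorem summable_alpha (hwidth : b - a ≤ 2 * L) (n : ℕ) :
    Summable fun m ↦ alpha L x t a b m n := by
  simp only [alpha_eq_endpointLaw]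
  exact (hasSum_measureReal_iUnion _ (pairwise_disjoint_translateIoo hwidth)
    fun _ ↦ measurableSet_Ioo).summable

theorem summable_integral_G (ht : 0 < t) (hab : a ≤ b) (hwidth : b - a ≤ 2 * L) :
    Summable fun m : ℤ ↦ ∫ y in (2 * m * L + a)..(2 * m * L + b), G t x y := by
  simp only [integral_G_eq_gaussianLaw ht hab]
  exact (hasSum_measureReal_iUnion _ (pairwise_disjoint_translateIoo hwidth)
    fun _ ↦ measurableSet_Ioo).summable

theorem tendsto_tsum_alpha (ht : 0 < t) (hab : a < b) (hwidth : b - a ≤ 2 * L) :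
    Tendsto (fun n ↦ ∑' m, alpha L x t a b m n) atTop
      (𝓝 (∑' m : ℤ, ∫ y in (2 * m * L + a)..(2 * m * L + b), G t x y)) := by
  simp only [alpha_eq_endpointLaw, integral_G_eq_gaussianLaw ht hab.le]
  exact tendsto_tsum_measureReal_of_null_frontier (tendsto_endpointLaw x ht.le)
    (pairwise_disjoint_translateIoo hwidth) (fun _ ↦ measurableSet_Ioo)
    (locallyFinite_translateIoo (by linarith) a b) fun _ ↦ gaussianLaw_frontier_Ioo x ht _ _

end Alpha

theorem stmt9_general (L x t : ℝ) (ht : 0 < t) (a b : ℝ) (hab : a < b) (hwidth : b - a ≤ 2 * L) :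
    (∀ m : ℤ,
      Tendsto (fun n : ℕ => alpha L x t a b m n - beta L x t a b m n) atTop
        (nhds ((∫ y in (2 * m * L + a)..(2 * m * L + b), G t x y) -
          ∫ y in (2 * m * L - b)..(2 * m * L - a), G t x y))) ∧
    Summable (fun m : ℤ =>
      (∫ y in (2 * m * L + a)..(2 * m * L + b), G t x y) -
        ∫ y in (2 * m * L - b)..(2 * m * L - a), G t x y) ∧
    Tendsto (fun n : ℕ => ∑' m : ℤ, (alpha L x t a b m n - beta L x t a b m n)) atTop
      (nhds (∑' m : ℤ,
        ((∫ y in (2 * m * L + a)..(2 * m * L + b), G t x y) -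
          ∫ y in (2 * m * L - b)..(2 * m * L - a), G t x y))) := by
  have hab' : -b < -a := neg_lt_neg hab
  have hwidth' : -a - -b ≤ 2 * L := by linarith
  have hβ_lim := tendsto_alpha (L := L) (x := x) ht hab'.le
  have hβ := summable_integral_G (x := x) ht hab'.le hwidth'
  have hβ_tsum := tendsto_tsum_alpha (x := x) ht hab' hwidth'
  simp only [← beta_eq_alpha_neg, ← sub_eq_add_neg] at hβ_lim hβ hβ_tsum
  have hα := summable_integral_G (x := x) ht hab.le hwidth
  refine ⟨fun m ↦ (tendsto_alpha ht hab.le m).sub (hβ_lim m), hα.sub hβ, ?_⟩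
  rw [hα.tsum_sub hβ]
  refine ((tendsto_tsum_alpha ht hab hwidth).sub hβ_tsum).congr fun n ↦ ?_
  rw [beta_eq_alpha_neg]
  exact ((summable_alpha hwidth n).tsum_sub (summable_alpha hwidth' n)).symm

theorem stmt9 (L x t : ℝ) (hL : 0 < L) (hx : 0 < x) (hxL : x < L) (ht : 0 < t)
    (a b : ℝ) (ha : 0 ≤ a) (hab : a < b) (hb : b ≤ L) :
    (∀ m : ℤ,
      Tendsto (fun n : ℕ => alpha L x t a b m n - beta L x t a b m n) atTop
        (nhds ((∫ y in (2 * m * L + a)..(2 * m * L + b), G t x y) -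
          ∫ y in (2 * m * L - b)..(2 * m * L - a), G t x y))) ∧
    Summable (fun m : ℤ =>
      (∫ y in (2 * m * L + a)..(2 * m * L + b), G t x y) -
        ∫ y in (2 * m * L - b)..(2 * m * L - a), G t x y) ∧
    Tendsto (fun n : ℕ => ∑' m : ℤ, (alpha L x t a b m n - beta L x t a b m n)) atTop
      (nhds (∑' m : ℤ,
        ((∫ y in (2 * m * L + a)..(2 * m * L + b), G t x y) -
          ∫ y in (2 * m * L - b)..(2 * m * L - a), G t x y))) := by
  exact stmt9_general L x t ht a b hab (by linarith)
end
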